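/- Let Υ ⊂ ℂ be open and connected, and suppose that for every λ ∈ Υ the potential q_λ = q − λ satisfies condition A for x ≥ 0 with a common constant C > 0 (i.e., with p_λ(x)=√(q(x)−λ) chosen so that Re p_λ(x)>0, one has Re p_λ ≥ C + (1/2)|p_λ′/p_λ| a.e. on ℝ₊ for every λ ∈ Υ; set ρ_λ = Re p_λ − (1/2)|p_λ′/p_λ|). Let φ(·,λ), ψ(·,λ) be the solutions of −y″+(q−λ)y=0 with φ(0,λ)=0, φ′(0,λ)=1, ψ(0,λ)=1, ψ′(0,λ)=0. Then there exists a single-valued analytic function μ : Υ → ℂ such that: μ(λ) ≠ 0 for all λ ∈ Υ; for every λ ∈ Υ the function w(x,λ)=φ(x,λ)+μ(λ)ψ(x,λ) belongs to L₂(ℝ₊) as a function of x and is, up to a constant factor, the unique nontrivial solution of −y″+(q−λ)y=0 lying in L₂(ℝ₊); moreover w(·,λ) ∈ L₂(ℝ₊, ρ_λ), w′(·,λ) ∈ L₂(ℝ₊, ρ_λ/|q−λ|), and Re( conj(w(x,λ))·w′(x,λ)/p_λ(x) ) → 0 as x → +∞. -/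

import Mathlib

/-!
For a solution `y` of `-y'' + Q y = f` and `p = √Q`, the energy `F = Re (ȳ y' / p)` satisfies
`F' ≥ ρ (|y|² + |y'/p|²) - |f| |y| / |p|` almost everywhere (`energy_deriv`), and under condition A
one has `ρ ≥ C` and `|p| ≥ C`. The whole proof rests on this inequality.

* For `f = 0` the energy is nondecreasing, and it is constant on an interval only if `y` vanishes
  there (`eq_zero_of_energy`). If `F ≤ 0` on the half-line, integration of the inequality gives all
  the weighted integrability statements (`integrable_of_energy`) and `F → 0` (`energy_tendsto`).
  Conversely, if `F` were positive at some point and `y` in `L₂`, then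
  `(-1/F)' ≥ C (2 - |y|²)` eventually, which is impossible on an infinite interval; so `L₂`
  solutions have `F ≤ 0` (`energy_nonpos_of_L2`). An `L₂` solution vanishing at `0` therefore has
  `F = 0` identically and is zero, whence uniqueness.
* Existence follows Weyl. The energy of `ψ` is positive for `b > 0`, so `ψ(b) ≠ 0`, and
  `w_b = φ + μ_b ψ` with `μ_b = -φ(b)/ψ(b)` vanishes at `b`; its energy is nonpositive on `[0, b]`.
  At the point `1` this is a quadratic inequality for `μ_b` with positive leading coefficient, so
  `μ_b` is bounded for `b ≥ 1` (`weyl_bound`). A limit `μ` of `μ_b` along an ultrafilter finer than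
  `atTop` yields `w = φ + μ ψ` with nonpositive energy on the half-line.
* Analyticity needs no smooth dependence of `φ`, `ψ` on the parameter. The difference of the `w_b`
  for two parameters `λ`, `λ₀` solves an inhomogeneous equation and has zero energy at `0` and `b`,
  so it is `O(|λ - λ₀|)` in `L₂(0, b)`. With the Wronskian identity this gives
  `|μ_b(λ) - μ_b(λ₀) + (λ - λ₀) ∫₀ᵇ w_b²| ≤ K |λ - λ₀|²` with `K` independent of `b`
  (`diff_est`). Passing to the limit along the ultrafilter shows that `μ` is complex differentiable
  on the open set `Υ`, hence analytic.
-/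

open MeasureTheory Filter Topology Complex

noncomputable section

/-- The open sector `Π_κ = {z ≠ 0 : arg z ∈ (-π+κ, π-κ)}`. -/
def PiSector (κ : ℝ) : Set ℂ :=
  {z : ℂ | z ≠ 0 ∧ -Real.pi + κ < z.arg ∧ z.arg < Real.pi - κ}

/-- `f` is locally absolutely continuous on `[a,∞)` with a.e. derivative `f'`:
`f'` is locally integrable there and `f` is recovered from `f'` by integration. -/
def LocACOn (f f' : ℝ → ℂ) (a : ℝ) : Prop :=
  (∀ b, a ≤ b → IntervalIntegrable f' volume a b) ∧
  ∀ x, a ≤ x → f x = f a + ∫ t in a..x, f' t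

/-- `y` (with first derivative `y'`) is a solution of `-y'' + q y = f` on `ℝ₊`:
`y, y'` are locally absolutely continuous on `[0,∞)` and the a.e. derivative of
`y'` equals `q y - f`. -/
def IsSol (q f y y' : ℝ → ℂ) : Prop :=
  LocACOn y y' 0 ∧ LocACOn y' (fun x => q x * y x - f x) 0

/-- `y` is nontrivial on `ℝ₊`. -/
def NontrivialSol (y : ℝ → ℂ) : Prop := ∃ x, 0 ≤ x ∧ y x ≠ 0

/-- membership in the weighted space `L₂(ℝ₊, w)`. -/
def MemL2 (w : ℝ → ℝ) (f : ℝ → ℂ) : Prop :=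
  AEStronglyMeasurable f (volume.restrict (Set.Ici (0:ℝ))) ∧
  IntegrableOn (fun x => w x * ‖f x‖ ^ 2) (Set.Ici (0:ℝ)) volume

/-- the branch `p = √q` with positive real part (principal branch). -/
def sqrtQ (q : ℝ → ℂ) (x : ℝ) : ℂ := (q x) ^ ((1 : ℂ) / 2)

/-- the a.e. derivative of `sqrtQ q`, where `q'` is the a.e. derivative of `q`. -/
def sqrtQD (q q' : ℝ → ℂ) (x : ℝ) : ℂ := q' x / (2 * sqrtQ q x)

/-- the weight `ρ = Re p - (1/2)|p'/p|`. -/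
def rho (q q' : ℝ → ℂ) (x : ℝ) : ℝ :=
  (sqrtQ q x).re - (1 / 2) * ‖sqrtQD q q' x / sqrtQ q x‖

/-- Condition A for `q` on `[x₀,∞)` with constant `C`, where `q'` is the
a.e. derivative of `q`: `q ∈ L¹loc(ℝ₊)`, `q` is locally absolutely continuous
on `[x₀,∞)`, `q` takes values in a sector `Π_κ` on `[x₀,∞)`, the branch
`p = √q` has positive real part there, and
`Re p ≥ C + (1/2)|p'/p|` a.e. on `[x₀,∞)`. -/
def CondA (q q' : ℝ → ℂ) (x₀ C : ℝ) : Prop :=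
  LocallyIntegrableOn q (Set.Ici (0:ℝ)) volume ∧
  LocACOn q q' x₀ ∧
  (∃ κ, 0 ≤ κ ∧ ∀ x, x₀ ≤ x → q x ∈ PiSector κ) ∧
  (∀ x, x₀ ≤ x → 0 < (sqrtQ q x).re) ∧
  0 < C ∧
  ∀ᵐ x : ℝ, x₀ ≤ x → C + (1 / 2) * ‖sqrtQD q q' x / sqrtQ q x‖ ≤ (sqrtQ q x).re

/-- The set `𝒩` of spectral parameters `lam` such that `q - lam` satisfies
condition A for `x ≥ x₁(lam)` for some `x₁(lam) ≥ 0` (note `(q - lam)' = q'`). -/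
def NSet (q q' : ℝ → ℂ) : Set ℂ :=
  {lam : ℂ | ∃ x₁ C, 0 ≤ x₁ ∧ CondA (fun x => q x - lam) q' x₁ C}

/-! ### Absolutely continuous functions -/

/-- Absolute continuity is preserved under composition with a map that is Lipschitz on the range. -/
theorem ac_comp_lip {X Y : Type*} [PseudoMetricSpace X] [PseudoMetricSpace Y] {f : ℝ → X}
    {g : X → Y} {a b : ℝ} {K : NNReal} (hf : AbsolutelyContinuousOnInterval f a b)
    (hg : LipschitzOnWith K g (f '' Set.uIcc a b)) :
    AbsolutelyContinuousOnInterval (fun x => g (f x)) a b := by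
  unfold AbsolutelyContinuousOnInterval at hf ⊢
  have h0 := hf.const_mul (K : ℝ)
  rw [mul_zero] at h0
  refine squeeze_zero' ?_ ?_ h0
  · exact Filter.Eventually.of_forall fun _ => Finset.sum_nonneg fun i hi => dist_nonneg
  · rw [eventually_inf_principal]
    filter_upwards with E hE
    rw [Finset.mul_sum]
    refine Finset.sum_le_sum fun i hi => ?_
    have := hE.1 i hi
    exact hg.dist_le_mul _ (Set.mem_image_of_mem _ this.1) _ (Set.mem_image_of_mem _ this.2)

theorem ac_integral {f : ℝ → ℂ} {a b c : ℝ} (h : IntervalIntegrable f volume a b)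
    (hc : c ∈ Set.uIcc a b) :
    AbsolutelyContinuousOnInterval (fun x => ∫ v in c..x, f v) a b := by
  have hre : IntervalIntegrable (fun x => (f x).re) volume a b := ⟨h.1.re, h.2.re⟩
  have him : IntervalIntegrable (fun x => (f x).im) volume a b := ⟨h.1.im, h.2.im⟩
  have h1 := ac_comp_lip (K := 1) (g := fun x : ℝ => (x : ℂ))
    (hre.absolutelyContinuousOnInterval_intervalIntegral hc)
    (Complex.isometry_ofReal.lipschitz.lipschitzOnWith)
  have h2 := (ac_comp_lip (K := 1) (g := fun x : ℝ => (x : ℂ))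
    (him.absolutelyContinuousOnInterval_intervalIntegral hc)
    (Complex.isometry_ofReal.lipschitz.lipschitzOnWith)).const_smul (M := ℂ) Complex.I
  have h3 := h1.add h2
  -- the real and imaginary parts of the primitive are the primitives of the parts
  have key : ∀ x ∈ Set.uIcc a b, (∫ v in c..x, f v) =
      ((∫ v in c..x, (f v).re : ℝ) : ℂ) + Complex.I • ((∫ v in c..x, (f v).im : ℝ) : ℂ) := by
    intro x hx
    have hx' : IntervalIntegrable f volume c x :=
      h.mono_set (Set.uIcc_subset_uIcc hc hx)
    have e1 : (∫ v in c..x, (f v).re) = (∫ v in c..x, f v).re :=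
      Complex.reCLM.intervalIntegral_comp_comm hx'
    have e2 : (∫ v in c..x, (f v).im) = (∫ v in c..x, f v).im :=
      Complex.imCLM.intervalIntegral_comp_comm hx'
    rw [e1, e2, smul_eq_mul, mul_comm Complex.I, Complex.re_add_im]
  refine Filter.Tendsto.congr' ?_ h3
  rw [Filter.EventuallyEq, eventually_inf_principal]
  filter_upwards with E hE
  refine Finset.sum_congr rfl fun i hi => ?_
  have := hE.1 i hi
  rw [key _ this.1, key _ this.2]
  rfl

theorem ac_congr {X : Type*} [PseudoMetricSpace X] {f g : ℝ → X} {a b : ℝ}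
    (hf : AbsolutelyContinuousOnInterval f a b) (h : ∀ x ∈ Set.uIcc a b, f x = g x) :
    AbsolutelyContinuousOnInterval g a b := by
  refine Filter.Tendsto.congr' ?_ hf
  rw [Filter.EventuallyEq, eventually_inf_principal]
  filter_upwards with E hE
  refine Finset.sum_congr rfl fun i hi => ?_
  have := hE.1 i hi
  rw [h _ this.1, h _ this.2]

/-- Lower bound for the increment of an absolutely continuous function. -/
theorem ac_integral_le {G g : ℝ → ℝ} {a b : ℝ} (hab : a ≤ b)
    (hG : AbsolutelyContinuousOnInterval G a b) (hg : IntervalIntegrable g volume a b)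
    (h : ∀ᵐ x : ℝ, x ∈ Set.Icc a b → ∃ d, HasDerivAt G d x ∧ g x ≤ d) :
    ∫ x in a..b, g x ≤ G b - G a := by
  rw [← hG.integral_deriv_eq_sub]
  refine intervalIntegral.integral_mono_ae_restrict hab hg hG.intervalIntegrable_deriv ?_
  rw [Filter.EventuallyLE, ae_restrict_iff' measurableSet_Icc]
  filter_upwards [h] with x hx hxm
  obtain ⟨d, hd, hle⟩ := hx hxm
  rwa [hd.deriv]

theorem ac_ftc {G g : ℝ → ℂ} {a b : ℝ} (hab : a ≤ b)
    (hG : AbsolutelyContinuousOnInterval G a b) (hg : IntervalIntegrable g volume a b)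
    (h : ∀ᵐ x : ℝ, x ∈ Set.Icc a b → HasDerivAt G (g x) x) :
    ∫ x in a..b, g x = G b - G a := by
  have hac := hG.sub (ac_integral hg (c := a) (by simp))
  obtain ⟨K, hK⟩ := hac.const_of_ae_hasDerivAt_zero (by
    filter_upwards [h, hg.ae_hasDerivAt_integral] with x h1 h2 hx
    have := (h1 (by rwa [Set.uIcc_of_le hab] at hx)).sub (h2 hx a (by simp))
    rwa [sub_self] at this)
  have h1 := hK a (by simp)
  have h2 := hK b (by simp)
  simp only [Pi.sub_apply, intervalIntegral.integral_same, sub_zero] at h1 h2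
  rw [h1, ← h2]; ring

theorem LocACOn.ac {f f' : ℝ → ℂ} (h : LocACOn f f' 0) {a b : ℝ} (ha : 0 ≤ a) (hab : a ≤ b) :
    AbsolutelyContinuousOnInterval f a b := by
  have hb := ha.trans hab
  have h1 := (ac_integral (h.1 b hb) (c := 0) (by simp))
  have h2 : AbsolutelyContinuousOnInterval (fun _ : ℝ => f 0) 0 b :=
    (LipschitzWith.const (f 0)).lipschitzOnWith.absolutelyContinuousOnInterval
  have h3 : AbsolutelyContinuousOnInterval f 0 b := by
    refine ac_congr (h2.add h1) fun x hx => ?_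
    rw [Set.uIcc_of_le hb] at hx
    exact (h.2 x hx.1).symm
  refine h3.mono ?_
  rw [Set.uIcc_of_le hb, Set.uIcc_of_le hab]
  exact Set.Icc_subset_Icc_left ha

theorem LocACOn.contOn {f f' : ℝ → ℂ} (h : LocACOn f f' 0) : ContinuousOn f (Set.Ici 0) := by
  intro x hx
  have hx' : (0:ℝ) ≤ x := hx
  have := (h.ac le_rfl (show (0:ℝ) ≤ x + 1 by linarith)).continuousOn
  rw [Set.uIcc_of_le (show (0:ℝ) ≤ x + 1 by linarith)] at this
  refine (this x ⟨hx', by linarith⟩).mono_of_mem_nhdsWithin ?_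
  rw [← Set.Ici_inter_Iic]
  exact inter_mem_nhdsWithin _ (Iic_mem_nhds (by linarith))

theorem LocACOn.deriv {f f' : ℝ → ℂ} (h : LocACOn f f' 0) :
    ∀ᵐ x : ℝ, 0 < x → HasDerivAt f (f' x) x := by
  have h1 : ∀ n : ℕ, ∀ᵐ x : ℝ, x ∈ Set.uIcc (0:ℝ) n →
      ∀ c ∈ Set.uIcc (0:ℝ) n, HasDerivAt (fun x => ∫ (t : ℝ) in c..x, f' t) (f' x) x :=
    fun n => (h.1 n (Nat.cast_nonneg n)).ae_hasDerivAt_integral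
  filter_upwards [ae_all_iff.2 h1] with x hx hx0
  obtain ⟨n, hn⟩ := exists_nat_ge x
  have := (hx n (by rw [Set.uIcc_of_le (by positivity)]; exact ⟨hx0.le, hn⟩) 0 (by simp)).const_add
    (f 0)
  refine this.congr_of_eventuallyEq ?_
  filter_upwards [lt_mem_nhds hx0] with y hy
  exact h.2 y hy.le

theorem LocACOn.add {f f' g g' : ℝ → ℂ} (hf : LocACOn f f' 0) (hg : LocACOn g g' 0) :
    LocACOn (fun x => f x + g x) (fun x => f' x + g' x) 0 := by
  refine ⟨fun b hb => (hf.1 b hb).add (hg.1 b hb), fun x hx => ?_⟩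
  beta_reduce
  rw [intervalIntegral.integral_add (hf.1 x hx) (hg.1 x hx), hf.2 x hx, hg.2 x hx]
  ring

theorem LocACOn.const_mul {f f' : ℝ → ℂ} (hf : LocACOn f f' 0) (c : ℂ) :
    LocACOn (fun x => c * f x) (fun x => c * f' x) 0 := by
  refine ⟨fun b hb => (hf.1 b hb).const_mul c, fun x hx => ?_⟩
  beta_reduce
  rw [intervalIntegral.integral_const_mul, hf.2 x hx]
  ring

/-! ### The branch `√Q` under condition A -/

theorem CondA.slit {Q q' : ℝ → ℂ} {C : ℝ} (h : CondA Q q' 0 C) {x : ℝ} (hx : 0 ≤ x) :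
    Q x ∈ slitPlane := by
  obtain ⟨κ, hκ, hq⟩ := h.2.2.1
  obtain ⟨h0, -, h2⟩ := hq x hx
  rw [Complex.mem_slitPlane_iff_arg]
  exact ⟨by intro e; linarith, h0⟩

theorem sqrtQ_sq (Q : ℝ → ℂ) (x : ℝ) : sqrtQ Q x ^ 2 = Q x := by
  unfold sqrtQ
  rw [one_div]
  exact_mod_cast Complex.cpow_nat_inv_pow (Q x) two_ne_zero

theorem CondA.sqrt_ne {Q q' : ℝ → ℂ} {C : ℝ} (h : CondA Q q' 0 C) {x : ℝ} (hx : 0 ≤ x) :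
    sqrtQ Q x ≠ 0 := by
  intro e
  have := h.2.2.2.1 x hx
  rw [e] at this
  simp at this

theorem CondA.sqrt_cont {Q q' : ℝ → ℂ} {C : ℝ} (h : CondA Q q' 0 C) :
    ContinuousOn (sqrtQ Q) (Set.Ici 0) := by
  unfold sqrtQ
  exact (h.2.1.contOn).cpow_const fun x hx => h.slit hx

theorem CondA.sqrt_deriv {Q q' : ℝ → ℂ} {C : ℝ} (h : CondA Q q' 0 C) :
    ∀ᵐ x : ℝ, 0 < x → HasDerivAt (sqrtQ Q) (sqrtQD Q q' x) x := by
  filter_upwards [h.2.1.deriv] with x hx hx0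
  have h1 : HasDerivAt (fun z : ℂ => z ^ ((1:ℂ) / 2)) (1 / (2 * sqrtQ Q x)) (Q x) := by
    have := (hasDerivAt_id (Q x)).cpow_const (c := (1:ℂ) / 2) (h.slit hx0.le)
    refine this.congr_deriv ?_
    have hne := h.sqrt_ne hx0.le
    have hq : Q x ≠ 0 := slitPlane_ne_zero (h.slit hx0.le)
    simp only [id, mul_one]
    rw [Complex.cpow_sub _ _ hq, Complex.cpow_one]
    change 1 / 2 * (sqrtQ Q x / Q x) = _
    rw [← sqrtQ_sq Q x]
    field_simp
  have := HasDerivAt.comp x h1 (hx hx0)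
  refine this.congr_deriv ?_
  unfold sqrtQD
  ring

theorem CondA.inv_sqrt_ac {Q q' : ℝ → ℂ} {C : ℝ} (h : CondA Q q' 0 C) {a b : ℝ} (ha : 0 ≤ a)
    (hab : a ≤ b) : AbsolutelyContinuousOnInterval (fun x => (sqrtQ Q x)⁻¹) a b := by
  have hac := h.2.1.ac ha hab
  have hsl : ∀ z ∈ Q '' Set.uIcc a b, z ∈ slitPlane := by
    rintro _ ⟨x, hx, rfl⟩
    rw [Set.uIcc_of_le hab] at hx
    exact h.slit (ha.trans hx.1)
  have hll : LocallyLipschitzOn (Q '' Set.uIcc a b) (fun z : ℂ => (z ^ ((1:ℂ) / 2))⁻¹) := by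
    intro z hz
    have hz' := hsl z hz
    have han : AnalyticAt ℂ (fun z : ℂ => (z ^ ((1:ℂ) / 2))⁻¹) z := by
      refine (analyticAt_id.cpow analyticAt_const hz').inv ?_
      simp [Complex.cpow_eq_zero_iff, slitPlane_ne_zero hz']
    obtain ⟨K, t, ht, hK⟩ := (han.contDiffAt (n := 1)).exists_lipschitzOnWith
    exact ⟨K, t, mem_nhdsWithin_of_mem_nhds ht, hK⟩
  obtain ⟨K, hK⟩ := hll.exists_lipschitzOnWith_of_compact
    (isCompact_uIcc.image_of_continuousOn hac.continuousOn)
  exact ac_comp_lip (g := fun z : ℂ => (z ^ ((1:ℂ) / 2))⁻¹) hac hK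

theorem CondA.le_norm {Q q' : ℝ → ℂ} {C : ℝ} (h : CondA Q q' 0 C) :
    ∀ᵐ x : ℝ, 0 ≤ x → C ≤ rho Q q' x ∧ C ≤ ‖sqrtQ Q x‖ := by
  filter_upwards [h.2.2.2.2.2] with x hx hx0
  have := hx hx0
  refine ⟨by unfold rho; linarith, ?_⟩
  have h1 := Complex.re_le_norm (sqrtQ Q x)
  have h2 := norm_nonneg (sqrtQD Q q' x / sqrtQ Q x)
  linarith

/-! ### The energy of a solution -/

/-- The energy `Re (ȳ y' / p)` with `p = √Q`. -/
def energy (Q y y' : ℝ → ℂ) (x : ℝ) : ℝ := ((starRingEnd ℂ) (y x) * y' x / sqrtQ Q x).re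

/-- The density `|y|² + |y'/p|²` that controls the growth of the energy. -/
def dens (Q y y' : ℝ → ℂ) (x : ℝ) : ℝ := ‖y x‖ ^ 2 + ‖y' x / sqrtQ Q x‖ ^ 2

theorem dens_nonneg (Q y y' : ℝ → ℂ) (x : ℝ) : 0 ≤ dens Q y y' x := by
  unfold dens; positivity

theorem abs_energy_le_mul (Q y y' : ℝ → ℂ) (x : ℝ) :
    |energy Q y y' x| ≤ ‖y x‖ * ‖y' x / sqrtQ Q x‖ := by
  unfold energy
  refine (Complex.abs_re_le_norm _).trans ?_
  rw [mul_div_assoc, norm_mul, RCLike.norm_conj]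

theorem abs_energy_le (Q y y' : ℝ → ℂ) (x : ℝ) :
    2 * |energy Q y y' x| ≤ dens Q y y' x := by
  have := abs_energy_le_mul Q y y' x
  unfold dens
  nlinarith [sq_nonneg (‖y x‖ - ‖y' x / sqrtQ Q x‖)]

/-- The algebraic inequality behind the energy estimate: `u`, `v`, `p`, `d` stand for `y`, `y'`,
`p`, `p'`, and the right-hand side is the derivative of the energy. -/
theorem energy_alg (u v p d f : ℂ) (hp : p ≠ 0) :
    (p.re - 1 / 2 * ‖d / p‖) * (‖u‖ ^ 2 + ‖v / p‖ ^ 2) - ‖f‖ * ‖u‖ / ‖p‖ ≤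
      ((((starRingEnd ℂ) v * v + (starRingEnd ℂ) u * (p ^ 2 * u - f)) * p
        - (starRingEnd ℂ) u * v * d) / p ^ 2).re := by
  obtain ⟨z, rfl⟩ : ∃ z, v = p * z := ⟨v / p, by field_simp⟩
  obtain ⟨e, rfl⟩ : ∃ e, d = p * e := ⟨d / p, by field_simp⟩
  rw [mul_div_cancel_left₀ _ hp, mul_div_cancel_left₀ _ hp]
  have e1 : (((starRingEnd ℂ) (p * z) * (p * z) + (starRingEnd ℂ) u * (p ^ 2 * u - f)) * p
        - (starRingEnd ℂ) u * (p * z) * (p * e)) / p ^ 2 =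
      ((starRingEnd ℂ) z * z) * (starRingEnd ℂ) p + ((starRingEnd ℂ) u * u) * p
        - (starRingEnd ℂ) u * f / p - (starRingEnd ℂ) u * z * e := by
    rw [map_mul]
    field_simp
    ring
  rw [e1, ← Complex.normSq_eq_conj_mul_self, ← Complex.normSq_eq_conj_mul_self]
  simp only [Complex.sub_re, Complex.add_re, Complex.re_ofReal_mul, Complex.conj_re,
    Complex.normSq_eq_norm_sq]
  have h1 : ((starRingEnd ℂ) u * f / p).re ≤ ‖f‖ * ‖u‖ / ‖p‖ := by
    refine (Complex.re_le_norm _).trans (le_of_eq ?_)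
    rw [norm_div, norm_mul, RCLike.norm_conj, mul_comm]
  have h2 : ((starRingEnd ℂ) u * z * e).re ≤ ‖u‖ * ‖z‖ * ‖e‖ := by
    refine (Complex.re_le_norm _).trans (le_of_eq ?_)
    rw [norm_mul, norm_mul, RCLike.norm_conj]
  nlinarith [mul_nonneg (norm_nonneg e) (sq_nonneg (‖u‖ - ‖z‖))]

section Energy

variable {Q q' f y y' : ℝ → ℂ} {C : ℝ}

theorem energy_ac (h : CondA Q q' 0 C) (hs : IsSol Q f y y') {a b : ℝ} (ha : 0 ≤ a)
    (hab : a ≤ b) : AbsolutelyContinuousOnInterval (energy Q y y') a b := by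
  have h1 := ac_comp_lip (K := 1) (g := fun z : ℂ => (starRingEnd ℂ) z) (hs.1.ac ha hab)
    (Complex.isometry_conj.lipschitz.lipschitzOnWith)
  have h2 := (h1.smul (hs.2.ac ha hab)).smul (h.inv_sqrt_ac ha hab)
  have h3 := ac_comp_lip (g := fun z : ℂ => z.re) h2 (Complex.reCLM.lipschitz.lipschitzOnWith)
  refine ac_congr h3 fun x _ => ?_
  simp [energy, div_eq_mul_inv]

theorem energy_cont (h : CondA Q q' 0 C) (hs : IsSol Q f y y') :
    ContinuousOn (energy Q y y') (Set.Ici 0) := by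
  unfold energy
  refine Complex.continuous_re.comp_continuousOn ?_
  exact ((Complex.continuous_conj.comp_continuousOn hs.1.contOn).mul hs.2.contOn).div
    h.sqrt_cont fun x hx => h.sqrt_ne hx

theorem dens_cont (h : CondA Q q' 0 C) (hs : IsSol Q f y y') :
    ContinuousOn (dens Q y y') (Set.Ici 0) := by
  unfold dens
  exact ((hs.1.contOn).norm.pow 2).add
    ((hs.2.contOn.div h.sqrt_cont fun x hx => h.sqrt_ne hx).norm.pow 2)

/-- The derivative of the energy dominates `ρ (|y|² + |y'/p|²)`, up to the forcing term. -/
theorem energy_deriv (h : CondA Q q' 0 C) (hs : IsSol Q f y y') :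
    ∀ᵐ x : ℝ, 0 < x → ∃ d, HasDerivAt (energy Q y y') d x ∧
      rho Q q' x * dens Q y y' x - ‖f x‖ * ‖y x‖ / ‖sqrtQ Q x‖ ≤ d := by
  filter_upwards [hs.1.deriv, hs.2.deriv, h.sqrt_deriv] with x h1 h2 h3 hx
  have hp := h.sqrt_ne hx.le
  have hc : HasDerivAt (fun x => (starRingEnd ℂ) (y x)) ((starRingEnd ℂ) (y' x)) x :=
    (h1 hx).star
  have hd := ((hc.mul (h2 hx)).div (h3 hx) hp)
  have hr := Complex.reCLM.hasFDerivAt.comp_hasDerivAt x hd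
  refine ⟨_, hr, ?_⟩
  have := energy_alg (y x) (y' x) (sqrtQ Q x) (sqrtQD Q q' x) (f x) hp
  rw [sqrtQ_sq] at this
  refine this.trans (le_of_eq ?_)
  simp only [Complex.reCLM_apply, Pi.mul_apply, sqrtQ_sq]

theorem ae_pos_of_Icc {P : ℝ → Prop} (h : ∀ᵐ x : ℝ, 0 < x → P x) {a b : ℝ} (ha : 0 ≤ a) :
    ∀ᵐ x : ℝ, x ∈ Set.Icc a b → P x := by
  have h0 : ∀ᵐ x : ℝ, x ≠ 0 := by simp [ae_iff, measure_singleton]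
  filter_upwards [h, h0] with x h1 h2 hx
  exact h1 (lt_of_le_of_ne (ha.trans hx.1) h2.symm)

theorem energy_le (h : CondA Q q' 0 C) (hs : IsSol Q f y y') {a b : ℝ} (ha : 0 ≤ a)
    (hab : a ≤ b) {g : ℝ → ℝ} (hg : IntervalIntegrable g volume a b)
    (hle : ∀ᵐ x : ℝ, x ∈ Set.Icc a b →
      g x ≤ rho Q q' x * dens Q y y' x - ‖f x‖ * ‖y x‖ / ‖sqrtQ Q x‖) :
    ∫ x in a..b, g x ≤ energy Q y y' b - energy Q y y' a := by
  refine ac_integral_le hab (energy_ac h hs ha hab) hg ?_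
  filter_upwards [ae_pos_of_Icc (energy_deriv h hs) ha, hle] with x h1 h2 hx
  obtain ⟨d, hd, hd'⟩ := h1 hx
  exact ⟨d, hd, (h2 hx).trans hd'⟩

theorem ii_of_cont {E : Type*} [NormedAddCommGroup E] {g : ℝ → E}
    (hg : ContinuousOn g (Set.Ici 0)) {a b : ℝ} (ha : 0 ≤ a)
    (hab : a ≤ b) : IntervalIntegrable g volume a b := by
  refine (hg.mono ?_).intervalIntegrable
  rw [Set.uIcc_of_le hab]
  exact fun x hx => ha.trans hx.1

theorem energy_le_C (h : CondA Q q' 0 C) (hs : IsSol Q 0 y y') {a b : ℝ} (ha : 0 ≤ a)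
    (hab : a ≤ b) :
    C * ∫ x in a..b, dens Q y y' x ≤ energy Q y y' b - energy Q y y' a := by
  rw [← intervalIntegral.integral_const_mul]
  refine energy_le h hs ha hab (ii_of_cont ((dens_cont h hs).const_mul C) ha hab) ?_
  filter_upwards [h.le_norm] with x h1 hx
  have := (h1 (ha.trans hx.1)).1
  simpa using mul_le_mul_of_nonneg_right this (dens_nonneg Q y y' x)

theorem energy_mono (h : CondA Q q' 0 C) (hs : IsSol Q 0 y y') {a b : ℝ} (ha : 0 ≤ a)
    (hab : a ≤ b) : energy Q y y' a ≤ energy Q y y' b := by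
  have h1 := energy_le_C h hs ha hab
  have h2 : 0 ≤ ∫ x in a..b, dens Q y y' x :=
    intervalIntegral.integral_nonneg hab fun x _ => dens_nonneg Q y y' x
  have := mul_nonneg h.2.2.2.2.1.le h2
  linarith

/-- If the energy does not increase from `a` to `b`, then the solution vanishes in between. -/
theorem eq_zero_of_energy (h : CondA Q q' 0 C) (hs : IsSol Q 0 y y') {a b : ℝ} (ha : 0 ≤ a)
    (hab : a < b) (hE : energy Q y y' b ≤ energy Q y y' a) :
    ∀ x ∈ Set.Icc a b, y x = 0 ∧ y' x = 0 := by
  have h1 := energy_le_C h hs ha hab.le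
  have hC := h.2.2.2.2.1
  have h2 : ∫ x in a..b, dens Q y y' x ≤ 0 := by
    by_contra! h3
    have := mul_pos hC h3
    linarith
  by_contra! hx
  obtain ⟨x, hx, hne⟩ := hx
  have hx0 : 0 < dens Q y y' x := by
    unfold dens
    by_cases hy : y x = 0
    · have := div_ne_zero (hne hy) (h.sqrt_ne (ha.trans hx.1))
      positivity
    · positivity
  have := intervalIntegral.integral_pos hab
    ((dens_cont h hs).mono fun t ht => ha.trans ht.1) (fun t _ => dens_nonneg Q y y' t)
    ⟨x, hx, hx0⟩
  linarith

/-- A square integrable homogeneous solution has nonpositive energy: a positive value of the energy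
would force it to blow up in finite time. -/
theorem energy_nonpos_of_L2 (h : CondA Q q' 0 C) (hs : IsSol Q 0 y y')
    (hL : IntegrableOn (fun x => ‖y x‖ ^ 2) (Set.Ici (0:ℝ)) volume) {a : ℝ} (ha : 0 ≤ a) :
    energy Q y y' a ≤ 0 := by
  by_contra! hpos
  have hC := h.2.2.2.2.1
  set I := ∫ x in Set.Ici (0:ℝ), ‖y x‖ ^ 2 with hI
  -- integrating `(-1/F)' ≥ C (2 - |y|²)` bounds the length of every interval `[a, b]`
  have key : ∀ b, a ≤ b → C * (2 * (b - a) - I) ≤ 1 / energy Q y y' a := by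
    intro b hab
    have hFpos : ∀ x, a ≤ x → 0 < energy Q y y' x := fun x hx =>
      hpos.trans_le (energy_mono h hs ha hx)
    have hll : LocallyLipschitzOn (energy Q y y' '' Set.uIcc a b) (fun z : ℝ => -z⁻¹) := by
      rintro _ ⟨x, hx, rfl⟩
      rw [Set.uIcc_of_le hab] at hx
      have hcd : ContDiffAt ℝ 1 (fun z : ℝ => -z⁻¹) (energy Q y y' x) :=
        (contDiffAt_inv ℝ (hFpos x hx.1).ne').neg
      obtain ⟨K, t, ht, hK⟩ := hcd.exists_lipschitzOnWith
      exact ⟨K, t, mem_nhdsWithin_of_mem_nhds ht, hK⟩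
    have hEac := energy_ac h hs ha hab
    obtain ⟨K, hK⟩ := hll.exists_lipschitzOnWith_of_compact
      (isCompact_uIcc.image_of_continuousOn hEac.continuousOn)
    have hG := ac_comp_lip hEac hK
    have hyi : IntervalIntegrable (fun x => ‖y x‖ ^ 2) volume a b :=
      ii_of_cont (hs.1.contOn.norm.pow 2) ha hab
    have hgi : IntervalIntegrable (fun x => C * (2 - ‖y x‖ ^ 2)) volume a b :=
      (intervalIntegrable_const.sub hyi).const_mul C
    have hle := ac_integral_le hab hG hgi (by
      filter_upwards [ae_pos_of_Icc (energy_deriv h hs) ha, h.le_norm] with x h1 h2 hx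
      obtain ⟨d, hd, hd'⟩ := h1 hx
      have hF := hFpos x hx.1
      refine ⟨_, (hd.inv hF.ne').neg, ?_⟩
      have hρ := (h2 (ha.trans hx.1)).1
      have hab2 := abs_energy_le_mul Q y y' x
      rw [abs_of_pos hF] at hab2
      have hd2 : C * dens Q y y' x ≤ d := by
        have := mul_le_mul_of_nonneg_right hρ (dens_nonneg Q y y' x)
        simp only [Pi.zero_apply, norm_zero, zero_mul, zero_div, sub_zero] at hd'
        linarith
      rw [neg_div, neg_neg, le_div_iff₀ (by positivity)]
      unfold dens at hd2
      set F := energy Q y y' x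
      set u := ‖y x‖
      set z := ‖y' x / sqrtQ Q x‖
      have hu : 0 ≤ u := norm_nonneg _
      have : 2 * F ^ 2 ≤ u ^ 2 * F ^ 2 + z ^ 2 := by
        nlinarith [sq_nonneg (u * F - z)]
      nlinarith [mul_le_mul_of_nonneg_left this hC.le, mul_nonneg hC.le (sq_nonneg u)])
    rw [intervalIntegral.integral_const_mul, intervalIntegral.integral_sub
      intervalIntegrable_const hyi, intervalIntegral.integral_const, smul_eq_mul] at hle
    have hIle : ∫ x in a..b, ‖y x‖ ^ 2 ≤ I := by
      rw [intervalIntegral.integral_of_le hab]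
      exact setIntegral_mono_set hL (Filter.Eventually.of_forall fun x => by positivity)
        (LE.le.eventuallyLE fun x hx => ha.trans hx.1.le)
    have hFb := inv_pos.2 (hFpos b hab)
    rw [one_div]
    nlinarith [mul_le_mul_of_nonneg_left hIle hC.le]
  set B := 1 / energy Q y y' a
  have hB : 0 < B := by positivity
  have hI0 : 0 ≤ I := integral_nonneg fun x => by positivity
  have := key (a + I + B / C) (by
    have := div_pos hB hC
    linarith)
  have hBC : C * (B / C) = B := by field_simp
  nlinarith [mul_nonneg hC.le hI0]

end Energy

/-! ### Combinations of solutions -/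

theorem IsSol.add_mul {Q y y' w w' : ℝ → ℂ} (hy : IsSol Q 0 y y') (hw : IsSol Q 0 w w') (c : ℂ) :
    IsSol Q 0 (fun x => y x + c * w x) (fun x => y' x + c * w' x) := by
  refine ⟨hy.1.add (hw.1.const_mul c), ?_⟩
  convert hy.2.add (hw.2.const_mul c) using 2 with x
  simp only [Pi.zero_apply]
  ring

theorem IsSol.sub_of_param {q w w' v v' : ℝ → ℂ} {l l₀ : ℂ}
    (hw : IsSol (fun x => q x - l) 0 w w') (hv : IsSol (fun x => q x - l₀) 0 v v') :
    IsSol (fun x => q x - l₀) (fun x => (l - l₀) * w x) (fun x => w x + (-1) * v x)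
      (fun x => w' x + (-1) * v' x) := by
  refine ⟨hw.1.add (hv.1.const_mul (-1)), ?_⟩
  convert hw.2.add (hv.2.const_mul (-1)) using 2 with x
  simp only [Pi.zero_apply]
  ring

/-! ### Solutions of nonpositive energy -/

section Decay

variable {Q q' y y' : ℝ → ℂ} {C : ℝ}

theorem rho_ii (h : CondA Q q' 0 C) {b : ℝ} (hb : 0 ≤ b) :
    IntervalIntegrable (rho Q q') volume 0 b := by
  unfold rho
  have h1 : IntervalIntegrable (fun x => (sqrtQ Q x).re) volume 0 b :=
    ii_of_cont (Complex.continuous_re.comp_continuousOn h.sqrt_cont) le_rfl hb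
  have hc : ContinuousOn (fun x => (2 * sqrtQ Q x * sqrtQ Q x)⁻¹) (Set.uIcc 0 b) := by
    rw [Set.uIcc_of_le hb]
    have hp := h.sqrt_cont.mono (fun x (hx : x ∈ Set.Icc 0 b) => hx.1)
    refine ((continuousOn_const.mul hp).mul hp).inv₀ fun x hx => ?_
    have := h.sqrt_ne hx.1
    simp [this]
  have h2 := ((h.2.1.1 b hb).mul_continuousOn hc).norm.const_mul (1 / 2)
  refine (h1.sub h2).congr ?_
  intro x _
  simp only [sqrtQD, div_eq_mul_inv, mul_inv, mul_assoc]

/-- Weighted square integrability for a solution of nonpositive energy, for any weight `v` such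
that `v |g|²` is dominated by `ρ (|y|² + |y'/p|²)`. -/
theorem integrable_of_energy (h : CondA Q q' 0 C) (hs : IsSol Q 0 y y')
    (hE : ∀ x, 0 ≤ x → energy Q y y' x ≤ 0) {v : ℝ → ℝ} {g : ℝ → ℂ}
    (hv : ∀ b, 0 ≤ b → IntervalIntegrable v volume 0 b) (hg : ContinuousOn g (Set.Ici 0))
    (hle : ∀ᵐ x : ℝ, 0 ≤ x → |v x * ‖g x‖ ^ 2| ≤ rho Q q' x * dens Q y y' x) :
    IntegrableOn (fun x => v x * ‖g x‖ ^ 2) (Set.Ici (0:ℝ)) volume := by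
  have hi : ∀ b, 0 ≤ b → IntervalIntegrable (fun x => v x * ‖g x‖ ^ 2) volume 0 b := by
    intro b hb
    refine (hv b hb).mul_continuousOn ((hg.norm.pow 2).mono ?_)
    rw [Set.uIcc_of_le hb]
    exact fun x hx => hx.1
  rw [integrableOn_Ici_iff_integrableOn_Ioi]
  refine integrableOn_Ioi_of_intervalIntegral_norm_bounded (l := atTop) (b := fun b : ℝ => max b 0)
    (-energy Q y y' 0) 0 (fun b => ?_) ?_ ?_
  · exact (hi _ (le_max_right _ _)).1
  · exact tendsto_atTop_mono (fun b => le_max_left b 0) tendsto_id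
  · refine Filter.Eventually.of_forall fun b => ?_
    have hb : (0:ℝ) ≤ max b 0 := le_max_right _ _
    have := energy_le h hs le_rfl hb (hi _ hb).norm (by
      filter_upwards [hle] with x h1 hx
      simpa using h1 hx.1)
    have := hE _ hb
    linarith

theorem energy_tendsto (h : CondA Q q' 0 C) (hs : IsSol Q 0 y y')
    (hE : ∀ x, 0 ≤ x → energy Q y y' x ≤ 0) : Tendsto (energy Q y y') atTop (𝓝 0) := by
  have hC := h.2.2.2.2.1
  set A := -energy Q y y' 0 / (2 * C) with hA
  have hlim : Tendsto (fun b : ℝ => -(A / b)) atTop (𝓝 0) := by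
    have := (tendsto_const_nhds (x := A)).div_atTop (tendsto_id (α := ℝ) (x := atTop))
    simpa using this.neg
  refine tendsto_of_tendsto_of_tendsto_of_le_of_le' hlim tendsto_const_nhds ?_ ?_
  · filter_upwards [eventually_gt_atTop 0] with b hb
    have h1 := energy_le_C h hs le_rfl hb.le
    -- the energy is nondecreasing, so the density is at least `-2 F(b)` on `[0, b]`
    have h2 : ∫ _x in (0:ℝ)..b, (-(2 * energy Q y y' b)) ≤ ∫ x in (0:ℝ)..b, dens Q y y' x := by
      refine intervalIntegral.integral_mono_on hb.le intervalIntegrable_const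
        (ii_of_cont (dens_cont h hs) le_rfl hb.le) fun x hx => ?_
      have h3 := energy_mono h hs hx.1 hx.2
      have h4 := abs_energy_le Q y y' x
      rw [abs_of_nonpos (hE x hx.1)] at h4
      linarith
    rw [intervalIntegral.integral_const, smul_eq_mul, sub_zero] at h2
    have h3 := hE b hb.le
    have h5 : C * (b * -(2 * energy Q y y' b)) ≤ -energy Q y y' 0 := by
      have := mul_le_mul_of_nonneg_left h2 hC.le
      linarith
    rw [hA, neg_le, div_div, le_div_iff₀ (by positivity)]
    linarith
  · filter_upwards [eventually_ge_atTop 0] with b hb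
    exact hE b hb

end Decay

/-! ### Dependence on the spectral parameter -/

/-- A quadratic inequality: if `a > 0`, then `Re ((f₁ + c f₂)‾ (d₁ + c d₂) / p) ≤ 0` with
`a = Re (f₂‾ d₂ / p)` confines `c` to a bounded set. -/
theorem bounded_of_energy (f₁ f₂ d₁ d₂ p : ℂ) (ha : 0 < ((starRingEnd ℂ) f₂ * d₂ / p).re) :
    ∃ R : ℝ, ∀ c : ℂ, ((starRingEnd ℂ) (f₁ + c * f₂) * (d₁ + c * d₂) / p).re ≤ 0 → ‖c‖ ≤ R := by
  set a := ((starRingEnd ℂ) f₂ * d₂ / p).re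
  set A := ‖(starRingEnd ℂ) f₁ * d₁ / p‖
  set B₁ := ‖(starRingEnd ℂ) f₁ * d₂ / p‖
  set B₂ := ‖(starRingEnd ℂ) f₂ * d₁ / p‖
  refine ⟨1 + (A + B₁ + B₂) / a, fun c hc => ?_⟩
  have e : (starRingEnd ℂ) (f₁ + c * f₂) * (d₁ + c * d₂) / p =
      (starRingEnd ℂ) f₁ * d₁ / p + c * ((starRingEnd ℂ) f₁ * d₂ / p)
        + (starRingEnd ℂ) c * ((starRingEnd ℂ) f₂ * d₁ / p)
        + ((starRingEnd ℂ) c * c) * ((starRingEnd ℂ) f₂ * d₂ / p) := by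
    rw [map_add, map_mul]; ring
  rw [e, ← Complex.normSq_eq_conj_mul_self] at hc
  simp only [Complex.add_re, Complex.re_ofReal_mul, Complex.normSq_eq_norm_sq] at hc
  have h1 := (Complex.abs_re_le_norm ((starRingEnd ℂ) f₁ * d₁ / p))
  have h2 := (Complex.abs_re_le_norm (c * ((starRingEnd ℂ) f₁ * d₂ / p)))
  have h3 := (Complex.abs_re_le_norm ((starRingEnd ℂ) c * ((starRingEnd ℂ) f₂ * d₁ / p)))
  rw [norm_mul] at h2 h3
  rw [RCLike.norm_conj] at h3
  have h1' := (abs_le.1 h1).1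
  have h2' := (abs_le.1 h2).1
  have h3' := (abs_le.1 h3).1
  have hA : 0 ≤ A := norm_nonneg _
  have hB₁ : 0 ≤ B₁ := norm_nonneg _
  have hB₂ : 0 ≤ B₂ := norm_nonneg _
  have hq : ‖c‖ ^ 2 * a ≤ A + ‖c‖ * B₁ + ‖c‖ * B₂ := by
    linarith
  by_contra! hR
  have hdiv : 0 ≤ (A + B₁ + B₂) / a := by positivity
  have hc1 : 1 < ‖c‖ := by linarith
  have h4 : (A + B₁ + B₂) < ‖c‖ * a := by
    rw [← div_lt_iff₀ ha]; linarith
  nlinarith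

/-- The two-parameter estimate: for solutions `w`, `v` with spectral parameters `l`, `l₀` that
vanish at `b` and have derivative `1` at `0`, the difference `w 0 - v 0` is
`-(l - l₀) ∫₀ᵇ v²` up to an error quadratic in `l - l₀`, uniformly in `b`. -/
theorem diff_est {q q' w w' v v' : ℝ → ℂ} {l l₀ : ℂ} {C M b : ℝ}
    (h : CondA (fun x => q x - l₀) q' 0 C)
    (hw : IsSol (fun x => q x - l) 0 w w') (hv : IsSol (fun x => q x - l₀) 0 v v')
    (hb : 0 ≤ b) (hwb : w b = 0) (hvb : v b = 0) (hw0 : w' 0 = 1) (hv0 : v' 0 = 1)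
    (hl : ‖l - l₀‖ ≤ C ^ 2 / 4) (hM : ∫ x in (0:ℝ)..b, ‖v x‖ ^ 2 ≤ M) :
    ‖w 0 - v 0 + (l - l₀) * ∫ x in (0:ℝ)..b, v x * v x‖ ≤
      ((2 / C ^ 4 + 1) * M / 2) * ‖l - l₀‖ ^ 2 := by
  have hC := h.2.2.2.2.1
  set Q : ℝ → ℂ := fun x => q x - l₀ with hQ
  have hs := hw.sub_of_param hv
  set g : ℝ → ℂ := fun x => w x + (-1) * v x with hg
  set g' : ℝ → ℂ := fun x => w' x + (-1) * v' x with hg'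
  set ε := ‖l - l₀‖ with hε
  have hε0 : 0 ≤ ε := norm_nonneg _
  have hgc : ContinuousOn g (Set.Ici 0) := hs.1.contOn
  have hvc : ContinuousOn v (Set.Ici 0) := hv.1.contOn
  have hwc : ContinuousOn w (Set.Ici 0) := hw.1.contOn
  have hgi : IntervalIntegrable (fun x => ‖g x‖ ^ 2) volume 0 b :=
    ii_of_cont (hgc.norm.pow 2) le_rfl hb
  have hvi : IntervalIntegrable (fun x => ‖v x‖ ^ 2) volume 0 b :=
    ii_of_cont (hvc.norm.pow 2) le_rfl hb
  -- the difference `g` has zero energy at both ends, which bounds it by `v` in the mean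
  have hA : ∫ x in (0:ℝ)..b, ‖g x‖ ^ 2 ≤ 2 * ε ^ 2 / C ^ 4 * ∫ x in (0:ℝ)..b, ‖v x‖ ^ 2 := by
    have h1 := energy_le h hs le_rfl hb
      (g := fun x => C / 2 * ‖g x‖ ^ 2 - ε ^ 2 / C ^ 3 * ‖v x‖ ^ 2)
      ((hgi.const_mul _).sub (hvi.const_mul _)) (by
        filter_upwards [h.le_norm] with x h1 hx
        obtain ⟨hρ, hp⟩ := h1 hx.1
        have hd : C * ‖g x‖ ^ 2 ≤ rho Q q' x * dens Q g g' x := by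
          refine mul_le_mul hρ ?_ (by positivity) (hC.le.trans hρ)
          unfold dens
          linarith [sq_nonneg ‖g' x / sqrtQ Q x‖]
        have hwn : ‖w x‖ ≤ ‖v x‖ + ‖g x‖ := by
          have : w x = v x + g x := by simp [hg]
          rw [this]
          exact norm_add_le _ _
        have hf : ‖(l - l₀) * w x‖ * ‖g x‖ / ‖sqrtQ Q x‖ ≤
            ε * (‖v x‖ + ‖g x‖) * ‖g x‖ / C := by
          rw [norm_mul]
          gcongr
        have hf2 : ε * (‖v x‖ + ‖g x‖) * ‖g x‖ / C ≤
            C / 2 * ‖g x‖ ^ 2 + ε ^ 2 / C ^ 3 * ‖v x‖ ^ 2 := by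
          have e1 : ε / C ≤ C / 4 := by
            rw [div_le_iff₀ hC]; linarith
          have e2 : ε * (‖v x‖ + ‖g x‖) * ‖g x‖ / C =
              ε / C * ‖g x‖ ^ 2 + ε / C * ‖v x‖ * ‖g x‖ := by field_simp; ring
          have e3 : C / 4 * ‖g x‖ ^ 2 + ε ^ 2 / C ^ 3 * ‖v x‖ ^ 2 - ε / C * ‖v x‖ * ‖g x‖ =
              (C * (‖g x‖ / 2 - ε / C ^ 2 * ‖v x‖) ^ 2) := by field_simp; ring
          have e4 : 0 ≤ C * (‖g x‖ / 2 - ε / C ^ 2 * ‖v x‖) ^ 2 := by positivity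
          have e5 := mul_le_mul_of_nonneg_right e1 (sq_nonneg ‖g x‖)
          linarith
        linarith)
    have hEb : energy Q g g' b = 0 := by simp [energy, hg, hwb, hvb]
    have hE0 : energy Q g g' 0 = 0 := by simp [energy, hg', hw0, hv0]
    rw [hEb, hE0, intervalIntegral.integral_sub (hgi.const_mul _) (hvi.const_mul _),
      intervalIntegral.integral_const_mul, intervalIntegral.integral_const_mul] at h1
    set I := ∫ x in (0:ℝ)..b, ‖g x‖ ^ 2
    set J := ∫ x in (0:ℝ)..b, ‖v x‖ ^ 2
    have e : 2 * ε ^ 2 / C ^ 4 * J = (ε ^ 2 / C ^ 3 * J) * (2 / C) := by field_simp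
    have e' : I = (C / 2 * I) * (2 / C) := by field_simp
    rw [e, e']
    have : 0 ≤ 2 / C := by positivity
    exact mul_le_mul_of_nonneg_right (by linarith) this
  -- the Wronskian identity
  have hW : ∫ x in (0:ℝ)..b, (l - l₀) * (w x * v x) =
      (w b * v' b - w' b * v b) - (w 0 * v' 0 - w' 0 * v 0) := by
    have hac : AbsolutelyContinuousOnInterval (fun x => w x * v' x - w' x * v x) 0 b :=
      ((hw.1.ac le_rfl hb).smul (hv.2.ac le_rfl hb)).sub
        ((hw.2.ac le_rfl hb).smul (hv.1.ac le_rfl hb))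
    refine ac_ftc hb hac (ii_of_cont (continuousOn_const.mul (hwc.mul hvc)) le_rfl hb) ?_
    refine ae_pos_of_Icc ?_ le_rfl
    filter_upwards [hw.1.deriv, hw.2.deriv, hv.1.deriv, hv.2.deriv] with x h1 h2 h3 h4 hx
    refine (((h1 hx).mul (h4 hx)).sub ((h2 hx).mul (h3 hx))).congr_deriv ?_
    simp only [Pi.zero_apply]
    ring
  rw [intervalIntegral.integral_const_mul, hwb, hvb, hw0, hv0] at hW
  have hvv : IntervalIntegrable (fun x => v x * v x) volume 0 b :=
    ii_of_cont (hvc.mul hvc) le_rfl hb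
  have hgv : IntervalIntegrable (fun x => g x * v x) volume 0 b :=
    ii_of_cont (hgc.mul hvc) le_rfl hb
  have hwv : ∫ x in (0:ℝ)..b, w x * v x =
      (∫ x in (0:ℝ)..b, g x * v x) + ∫ x in (0:ℝ)..b, v x * v x := by
    rw [← intervalIntegral.integral_add hgv hvv]
    congr 1 with x
    simp only [hg]; ring
  rw [hwv] at hW
  have hfin : w 0 - v 0 + (l - l₀) * ∫ x in (0:ℝ)..b, v x * v x =
      -((l - l₀) * ∫ x in (0:ℝ)..b, g x * v x) := by
    linear_combination hW
  rw [hfin, norm_neg, norm_mul]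
  rcases hε0.eq_or_lt with h0 | hpos
  · rw [← hε, ← h0]; simp
  have hB : ‖∫ x in (0:ℝ)..b, g x * v x‖ ≤
      ∫ x in (0:ℝ)..b, ((2 * ε)⁻¹ * ‖g x‖ ^ 2 + ε / 2 * ‖v x‖ ^ 2) := by
    refine intervalIntegral.norm_integral_le_of_norm_le hb ?_
      ((hgi.const_mul _).add (hvi.const_mul _))
    refine Filter.Eventually.of_forall fun x _ => ?_
    rw [norm_mul]
    have e : (2 * ε)⁻¹ * ‖g x‖ ^ 2 + ε / 2 * ‖v x‖ ^ 2 - ‖g x‖ * ‖v x‖ =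
        (2 * ε)⁻¹ * (‖g x‖ - ε * ‖v x‖) ^ 2 := by field_simp; ring
    have : 0 ≤ (2 * ε)⁻¹ * (‖g x‖ - ε * ‖v x‖) ^ 2 := by positivity
    linarith
  rw [intervalIntegral.integral_add (hgi.const_mul _) (hvi.const_mul _),
      intervalIntegral.integral_const_mul, intervalIntegral.integral_const_mul] at hB
  set I := ∫ x in (0:ℝ)..b, ‖g x‖ ^ 2
  set J := ∫ x in (0:ℝ)..b, ‖v x‖ ^ 2
  have hI : (2 * ε)⁻¹ * I ≤ (2 * ε)⁻¹ * (2 * ε ^ 2 / C ^ 4 * J) := by gcongr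
  have e1 : (2 * ε)⁻¹ * (2 * ε ^ 2 / C ^ 4 * J) + ε / 2 * J = ε * ((2 / C ^ 4 + 1) * J / 2) := by
    field_simp
  have e2 : (2 / C ^ 4 + 1) * J / 2 ≤ (2 / C ^ 4 + 1) * M / 2 := by gcongr
  calc ε * ‖∫ x in (0:ℝ)..b, g x * v x‖ ≤ ε * (ε * ((2 / C ^ 4 + 1) * M / 2)) := by
        refine mul_le_mul_of_nonneg_left ?_ hε0
        have := mul_le_mul_of_nonneg_left e2 hε0
        linarith
    _ = _ := by ring

/-! ### The Weyl function -/

/-- A solution with zero initial energy and nonzero initial data has positive energy afterwards. -/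
theorem energy_pos {Q q' y y' : ℝ → ℂ} {C : ℝ} (h : CondA Q q' 0 C) (hs : IsSol Q 0 y y')
    (h0 : energy Q y y' 0 = 0) (hne : y 0 ≠ 0 ∨ y' 0 ≠ 0) {b : ℝ} (hb : 0 < b) :
    0 < energy Q y y' b := by
  by_contra! hle
  have := eq_zero_of_energy h hs le_rfl hb (hle.trans h0.ge) 0 ⟨le_rfl, hb.le⟩
  tauto

/-- The solution `φ + m ψ` that vanishes at `b` has initial value `m = -φ(b)/ψ(b)`. These values
are bounded in `b ≥ 1`, and so are the `L₂(0,b)` norms of the solutions. -/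
theorem weyl_bound {Q q' φ φd ψ ψd : ℝ → ℂ} {C : ℝ} (h : CondA Q q' 0 C)
    (hφ : IsSol Q 0 φ φd) (hφ0 : φ 0 = 0) (hφ1 : φd 0 = 1)
    (hψ : IsSol Q 0 ψ ψd) (hψ0 : ψ 0 = 1) (hψ1 : ψd 0 = 0) :
    (∀ b, 0 < b → φ b + -(φ b / ψ b) * ψ b = 0) ∧
    ∃ R M : ℝ, (∀ b, 1 ≤ b → ‖-(φ b / ψ b)‖ ≤ R) ∧
      ∀ b, 1 ≤ b → ∫ x in (0:ℝ)..b, ‖φ x + -(φ b / ψ b) * ψ x‖ ^ 2 ≤ M := by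
  have hC := h.2.2.2.2.1
  have hpos : ∀ b, 0 < b → 0 < energy Q ψ ψd b := fun b hb =>
    energy_pos h hψ (by simp [energy, hψ1]) (Or.inl (by simp [hψ0])) hb
  have hne : ∀ b, 0 < b → ψ b ≠ 0 := by
    intro b hb e
    have := hpos b hb
    simp [energy, e] at this
  have hz : ∀ b, 0 < b → φ b + -(φ b / ψ b) * ψ b = 0 := by
    intro b hb
    have := hne b hb
    field_simp
    ring
  obtain ⟨R, hR⟩ := bounded_of_energy (φ 1) (ψ 1) (φd 1) (ψd 1) (sqrtQ Q 1) (hpos 1 one_pos)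
  have hEb : ∀ b, 1 ≤ b → energy Q (fun x => φ x + -(φ b / ψ b) * ψ x)
      (fun x => φd x + -(φ b / ψ b) * ψd x) b = 0 := by
    intro b hb
    simp only [energy]
    rw [hz b (by linarith)]
    simp
  have hRb : ∀ b, 1 ≤ b → ‖-(φ b / ψ b)‖ ≤ R := fun b hb => by
    have := energy_mono h (hφ.add_mul hψ (-(φ b / ψ b))) zero_le_one hb
    rw [hEb b hb] at this
    exact hR _ this
  refine ⟨hz, R, R / ‖sqrtQ Q 0‖ / C, hRb, fun b hb => ?_⟩
  have hb0 : (0:ℝ) ≤ b := by linarith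
  have hs := hφ.add_mul hψ (-(φ b / ψ b))
  have h1 := energy_le_C h hs le_rfl hb0
  rw [hEb b hb] at h1
  have h2 : -energy Q (fun x => φ x + -(φ b / ψ b) * ψ x)
      (fun x => φd x + -(φ b / ψ b) * ψd x) 0 ≤ R / ‖sqrtQ Q 0‖ := by
    refine (neg_le_abs _).trans ?_
    refine (Complex.abs_re_le_norm _).trans ?_
    rw [norm_div, norm_mul, RCLike.norm_conj]
    simp only [hφ0, hφ1, hψ0, hψ1, mul_one, zero_add, mul_zero, add_zero, norm_one]
    gcongr
    exact hRb b hb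
  have h3 : ∫ x in (0:ℝ)..b, ‖φ x + -(φ b / ψ b) * ψ x‖ ^ 2 ≤
      ∫ x in (0:ℝ)..b, dens Q (fun x => φ x + -(φ b / ψ b) * ψ x)
      (fun x => φd x + -(φ b / ψ b) * ψd x) x := by
    refine intervalIntegral.integral_mono_on hb0
      (ii_of_cont (hs.1.contOn.norm.pow 2) le_rfl hb0)
      (ii_of_cont (dens_cont h hs) le_rfl hb0) fun x _ => ?_
    unfold dens
    exact le_add_of_nonneg_right (by positivity)
  rw [le_div_iff₀ hC]
  nlinarith [mul_le_mul_of_nonneg_left h3 hC.le]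

theorem exists_ultra_lim {E : Type*} [NormedAddCommGroup E] [ProperSpace E] {f : ℝ → E} {R : ℝ}
    (U : Ultrafilter ℝ) (hU : (U : Filter ℝ) ≤ atTop) (h : ∀ b, 1 ≤ b → ‖f b‖ ≤ R) :
    ∃ l, Tendsto f (U : Filter ℝ) (𝓝 l) := by
  obtain ⟨l, -, hl⟩ := (isCompact_closedBall (0 : E) R).ultrafilter_le_nhds' (U.map f) (by
    refine hU ?_
    filter_upwards [eventually_ge_atTop 1] with b hb
    simpa using h b hb)
  exact ⟨l, hl⟩

/-- A function with a quadratic first-order Taylor bound at a point is differentiable there. -/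
theorem hasDerivAt_of_quadratic {μ : ℂ → ℂ} {l₀ D : ℂ} {K : ℝ}
    (h : ∀ᶠ l in 𝓝 l₀, ‖μ l - μ l₀ + (l - l₀) * D‖ ≤ K * ‖l - l₀‖ ^ 2) :
    HasDerivAt μ (-D) l₀ := by
  rw [hasDerivAt_iff_isLittleO]
  have h1 : (fun l => μ l - μ l₀ - (l - l₀) • (-D)) =O[𝓝 l₀] fun l => ‖l - l₀‖ ^ 2 := by
    refine Asymptotics.IsBigO.of_bound K ?_
    filter_upwards [h] with l hl
    simpa using hl
  refine h1.trans_isLittleO ?_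
  have h2 : (fun l : ℂ => l - l₀) =O[𝓝 l₀] fun l => l - l₀ := Asymptotics.isBigO_refl _ _
  have h3 : (fun l : ℂ => ‖l - l₀‖) =o[𝓝 l₀] fun _ => (1:ℝ) := by
    rw [Asymptotics.isLittleO_one_iff]
    have : Continuous fun l : ℂ => ‖l - l₀‖ := by fun_prop
    simpa using this.tendsto l₀
  have h4 := h3.mul_isBigO h2.norm_norm
  rw [← Asymptotics.isLittleO_norm_right]
  simpa [sq] using h4

/-- Weyl function: if `q - lam` satisfies condition A for `x ≥ 0` with a common
constant `C` for every `lam` in an open connected set `Υ`, and `φ, ψ` are the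
solutions of `-y'' + (q - lam) y = 0` with `φ(0)=0, φ'(0)=1, ψ(0)=1, ψ'(0)=0`,
then there is an analytic nonvanishing `μ : Υ → ℂ` such that
`w = φ + μ ψ ∈ L₂(ℝ₊)` is, up to a constant factor, the unique nontrivial
`L₂(ℝ₊)`-solution; moreover `w ∈ L₂(ℝ₊, ρ_lam)`, `w' ∈ L₂(ℝ₊, ρ_lam/|q-lam|)`
and `Re(w̄ w'/p_lam) → 0` at `+∞`. -/
theorem statement6 (q q' : ℝ → ℂ) (Υ : Set ℂ) (hΥo : IsOpen Υ)
    (hΥc : IsConnected Υ) (C : ℝ)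
    (hA : ∀ lam ∈ Υ, CondA (fun x => q x - lam) q' 0 C)
    (φ φd ψ ψd : ℂ → ℝ → ℂ)
    (hφ : ∀ lam ∈ Υ, IsSol (fun x => q x - lam) 0 (φ lam) (φd lam) ∧
      φ lam 0 = 0 ∧ φd lam 0 = 1)
    (hψ : ∀ lam ∈ Υ, IsSol (fun x => q x - lam) 0 (ψ lam) (ψd lam) ∧
      ψ lam 0 = 1 ∧ ψd lam 0 = 0) :
    ∃ μ : ℂ → ℂ, AnalyticOnNhd ℂ μ Υ ∧ ∀ lam ∈ Υ,
      μ lam ≠ 0 ∧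
      IsSol (fun x => q x - lam) 0 (fun x => φ lam x + μ lam * ψ lam x)
        (fun x => φd lam x + μ lam * ψd lam x) ∧
      MemL2 (fun _ => 1) (fun x => φ lam x + μ lam * ψ lam x) ∧
      (∀ y y', IsSol (fun x => q x - lam) 0 y y' → MemL2 (fun _ => 1) y →
        ∃ c : ℂ, (∀ x, 0 ≤ x → y x = c * (φ lam x + μ lam * ψ lam x)) ∧
          ∀ x, 0 ≤ x → y' x = c * (φd lam x + μ lam * ψd lam x)) ∧
      MemL2 (rho (fun x => q x - lam) q') (fun x => φ lam x + μ lam * ψ lam x) ∧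
      MemL2 (fun x => rho (fun t => q t - lam) q' x / ‖q x - lam‖)
        (fun x => φd lam x + μ lam * ψd lam x) ∧
      Tendsto (fun x => ((starRingEnd ℂ) (φ lam x + μ lam * ψ lam x) *
          (φd lam x + μ lam * ψd lam x) / sqrtQ (fun t => q t - lam) x).re)
        atTop (nhds 0) := by
  obtain ⟨U, hU⟩ : ∃ U : Ultrafilter ℝ, (U : Filter ℝ) ≤ atTop :=
    ⟨Ultrafilter.of atTop, Ultrafilter.of_le atTop⟩
  -- initial values of the solutions that vanish at `b`
  set m : ℝ → ℂ → ℂ := fun b l => -(φ l b / ψ l b) with hm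
  have hbd := fun l (hl : l ∈ Υ) => weyl_bound (hA l hl) (hφ l hl).1 (hφ l hl).2.1 (hφ l hl).2.2
    (hψ l hl).1 (hψ l hl).2.1 (hψ l hl).2.2
  set μ : ℂ → ℂ := fun l => limUnder (U : Filter ℝ) (fun b => m b l) with hμ
  have hlim : ∀ l ∈ Υ, Tendsto (fun b => m b l) (U : Filter ℝ) (𝓝 (μ l)) := by
    intro l hl
    obtain ⟨-, R, M, hR, -⟩ := hbd l hl
    exact tendsto_nhds_limUnder (exists_ultra_lim U hU hR)
  have hdiff : ∀ l₀ ∈ Υ, DifferentiableAt ℂ μ l₀ := by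
    intro l₀ hl₀
    obtain ⟨hz, R, M, -, hM⟩ := hbd l₀ hl₀
    have hsol := fun b => (hφ l₀ hl₀).1.add_mul (hψ l₀ hl₀).1 (m b l₀)
    -- a limit point of the truncated integrals serves as the derivative, up to sign
    obtain ⟨D, hD⟩ := exists_ultra_lim (R := M) U hU
      (f := fun b => ∫ x in (0:ℝ)..b, (φ l₀ x + m b l₀ * ψ l₀ x) * (φ l₀ x + m b l₀ * ψ l₀ x)) (by
      intro b hb
      refine le_trans ?_ (hM b hb)
      refine intervalIntegral.norm_integral_le_of_norm_le (by linarith) ?_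
        (ii_of_cont ((hsol b).1.contOn.norm.pow 2) le_rfl (by linarith))
      refine Filter.Eventually.of_forall fun x _ => ?_
      rw [norm_mul, sq])
    refine (hasDerivAt_of_quadratic (D := D) (K := (2 / C ^ 4 + 1) * M / 2) ?_).differentiableAt
    have hC := (hA l₀ hl₀).2.2.2.2.1
    have hnear : ∀ᶠ l in 𝓝 l₀, ‖l - l₀‖ ≤ C ^ 2 / 4 := by
      filter_upwards [Metric.closedBall_mem_nhds l₀ (show 0 < C ^ 2 / 4 by positivity)] with l hl
      simpa [dist_eq_norm] using hl
    filter_upwards [hnear, hΥo.mem_nhds hl₀] with l hl hlΥ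
    have ht := (((hlim l hlΥ).sub (hlim l₀ hl₀)).add (hD.const_mul (l - l₀))).norm
    refine le_of_tendsto ht (hU ?_)
    filter_upwards [eventually_ge_atTop 1] with b hb
    obtain ⟨hz', -⟩ := hbd l hlΥ
    have := diff_est (hA l₀ hl₀) ((hφ l hlΥ).1.add_mul (hψ l hlΥ).1 (m b l)) (hsol b)
      (show (0:ℝ) ≤ b by linarith) (hz' b (by linarith)) (hz b (by linarith))
      (by simp [(hφ l hlΥ).2.2, (hψ l hlΥ).2.2]) (by simp [(hφ l₀ hl₀).2.2, (hψ l₀ hl₀).2.2]) hl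
      (hM b hb)
    simpa [(hφ l hlΥ).2.1, (hψ l hlΥ).2.1, (hφ l₀ hl₀).2.1, (hψ l₀ hl₀).2.1] using this
  refine ⟨μ, DifferentiableOn.analyticOnNhd
    (fun l hl => (hdiff l hl).differentiableWithinAt) hΥo, ?_⟩
  intro lam hl
  have h := hA lam hl
  obtain ⟨hφs, hφ0, hφ1⟩ := hφ lam hl
  obtain ⟨hψs, hψ0, hψ1⟩ := hψ lam hl
  have hC := h.2.2.2.2.1
  have hs := hφs.add_mul hψs (μ lam)
  have hw0 : φ lam 0 + μ lam * ψ lam 0 = μ lam := by rw [hφ0, hψ0]; ring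
  have hE : ∀ x, 0 ≤ x → energy (fun x => q x - lam) (fun x => φ lam x + μ lam * ψ lam x)
      (fun x => φd lam x + μ lam * ψd lam x) x ≤ 0 := by
    intro x hx
    have hcont : Continuous fun c : ℂ => energy (fun x => q x - lam)
        (fun x => φ lam x + c * ψ lam x) (fun x => φd lam x + c * ψd lam x) x := by
      unfold energy
      exact Complex.continuous_re.comp (((Complex.continuous_conj.comp (by fun_prop)).mul
        (by fun_prop)).div_const _)
    refine le_of_tendsto ((hcont.tendsto _).comp (hlim lam hl)) (hU ?_)
    filter_upwards [eventually_ge_atTop 1, eventually_ge_atTop x] with b hb hxb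
    have h1 := energy_mono h (hφs.add_mul hψs (m b lam)) hx hxb
    refine h1.trans (le_of_eq ?_)
    simp only [energy]
    rw [(hbd lam hl).1 b (by linarith)]
    simp
  have hμ0 : μ lam ≠ 0 := by
    intro e
    have h1 := hE 1 zero_le_one
    have h2 := energy_pos h hφs (by simp [energy, hφ0]) (Or.inr (by simp [hφ1])) one_pos
    simp only [e, zero_mul, add_zero] at h1
    exact absurd h2 (not_lt.2 h1)
  have hmeas : ∀ {g : ℝ → ℂ}, ContinuousOn g (Set.Ici 0) →
      AEStronglyMeasurable g (volume.restrict (Set.Ici (0:ℝ))) :=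
    fun hg => hg.aestronglyMeasurable measurableSet_Ici
  have hwC : ∀ᵐ x : ℝ, 0 ≤ x → |C * ‖φ lam x + μ lam * ψ lam x‖ ^ 2| ≤
      rho (fun x => q x - lam) q' x * dens (fun x => q x - lam)
        (fun x => φ lam x + μ lam * ψ lam x) (fun x => φd lam x + μ lam * ψd lam x) x := by
    filter_upwards [h.le_norm] with x h1 hx
    have hρ := (h1 hx).1
    rw [abs_of_nonneg (by positivity)]
    refine mul_le_mul hρ ?_ (by positivity) (hC.le.trans hρ)
    unfold dens
    exact le_add_of_nonneg_right (by positivity)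
  have hwL : MemL2 (fun _ => 1) (fun x => φ lam x + μ lam * ψ lam x) := by
    refine ⟨hmeas hs.1.contOn, ?_⟩
    have := integrable_of_energy h hs hE (v := fun _ => C)
      (fun _ _ => intervalIntegrable_const) hs.1.contOn hwC
    have h2 : IntegrableOn (fun x => C⁻¹ * (C * ‖φ lam x + μ lam * ψ lam x‖ ^ 2))
        (Set.Ici (0:ℝ)) volume := this.const_mul C⁻¹
    refine h2.congr_fun (fun x _ => ?_) measurableSet_Ici
    beta_reduce
    field_simp
  refine ⟨hμ0, hs, hwL, ?_, ⟨hmeas hs.1.contOn, ?_⟩, ⟨hmeas hs.2.contOn, ?_⟩,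
    energy_tendsto h hs hE⟩
  · intro y y' hy hyL
    -- the combination vanishing at `0` has zero initial energy, and it is square integrable
    set c := y 0 / μ lam with hc
    have hg := hy.add_mul hs (-c)
    have hg0 : y 0 + -c * (φ lam 0 + μ lam * ψ lam 0) = 0 := by
      rw [hw0, hc]; field_simp; ring
    have hgL : IntegrableOn (fun x => ‖y x + -c * (φ lam x + μ lam * ψ lam x)‖ ^ 2)
        (Set.Ici (0:ℝ)) volume := by
      have i1 : IntegrableOn (fun x => ‖y x‖ ^ 2) (Set.Ici (0:ℝ)) volume := by
        simpa using hyL.2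
      have i2 : IntegrableOn (fun x => ‖φ lam x + μ lam * ψ lam x‖ ^ 2) (Set.Ici (0:ℝ)) volume := by
        simpa using hwL.2
      refine Integrable.mono' ((i1.const_mul 2).add (i2.const_mul (2 * ‖c‖ ^ 2)))
        ((hg.1.contOn.norm.pow 2).aestronglyMeasurable measurableSet_Ici)
        (Filter.Eventually.of_forall fun x => ?_)
      rw [Real.norm_of_nonneg (by positivity)]
      have h1 := norm_add_le (y x) (-c * (φ lam x + μ lam * ψ lam x))
      rw [norm_mul, norm_neg] at h1
      have h2 := pow_le_pow_left₀ (norm_nonneg _) h1 2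
      simp only [Pi.add_apply]
      nlinarith [sq_nonneg (‖y x‖ - ‖c‖ * ‖φ lam x + μ lam * ψ lam x‖)]
    have hz : ∀ x, 0 ≤ x → y x + -c * (φ lam x + μ lam * ψ lam x) = 0 ∧
        y' x + -c * (φd lam x + μ lam * ψd lam x) = 0 := by
      intro x hx
      have h1 := energy_nonpos_of_L2 h hg hgL (show (0:ℝ) ≤ x + 1 by linarith)
      refine eq_zero_of_energy h hg le_rfl (show (0:ℝ) < x + 1 by linarith)
        (h1.trans (le_of_eq ?_)) x ⟨hx, by linarith⟩
      simp only [energy]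
      rw [hg0]
      simp
    exact ⟨c, fun x hx => by linear_combination (hz x hx).1,
      fun x hx => by linear_combination (hz x hx).2⟩
  · refine integrable_of_energy h hs hE (fun b hb => rho_ii h hb) hs.1.contOn ?_
    filter_upwards [h.le_norm] with x h1 hx
    have hρ := hC.le.trans (h1 hx).1
    rw [abs_of_nonneg (by positivity)]
    refine mul_le_mul_of_nonneg_left ?_ hρ
    unfold dens
    exact le_add_of_nonneg_right (by positivity)
  · refine integrable_of_energy h hs hE (fun b hb => ?_) hs.2.contOn ?_
    · simp only [div_eq_mul_inv]
      refine (rho_ii h hb).mul_continuousOn ?_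
      rw [Set.uIcc_of_le hb]
      exact ((h.2.1.contOn.mono fun x hx => hx.1).norm).inv₀ fun x hx =>
        norm_ne_zero_iff.2 (slitPlane_ne_zero (h.slit hx.1))
    · filter_upwards [h.le_norm] with x h1 hx
      have hρ := hC.le.trans (h1 hx).1
      rw [abs_of_nonneg (by positivity), div_mul_eq_mul_div, mul_div_assoc]
      refine mul_le_mul_of_nonneg_left ?_ hρ
      have e := sqrtQ_sq (fun x => q x - lam) x
      simp only [dens]
      rw [← e, norm_pow, norm_div, div_pow]
      exact le_add_of_nonneg_left (by positivity)
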